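/- Let $0<p\le 1$, $-1<\alpha<\infty$, and set $t=(\alpha+2)/p+1$. If $\mu$ is a positive Borel measure on $\mathbb{D}$ which is a $(1/p)$-Carleson measure for $L^1_a(\omega_\alpha)$ (i.e. $\sup_{z\in\mathbb{D}}\mu(D(z,r))/(1-|z|^2)^{(\alpha+2)/p}<\infty$ for some $0<r<1$), then for every Bloch function $g$, $\sup_{\zeta\in\mathbb{D}}(1-|\zeta|^2)\int_{\mathbb{D}}\frac{|g(z)-g(\zeta)|}{|1-z\bar\zeta|^t}\,d\mu(z)\le C\|g\|_{\mathcal{B}}$ with $C$ independent of $g$. -/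

import Mathlib

/-!
Write `s = (a + 2) / p`, so that `s > 1`, and let `0 < ε < min 1 (s - 1)`.

A Bloch function grows at most like the hyperbolic distance, which is logarithmic in
`‖1 - z ζ̄‖² / ((1 - ‖z‖²) (1 - ‖ζ‖²))`; in particular `‖g z - g ζ‖` is at most a constant times
`‖g‖` times the `ε`-th power of this quantity (`bloch_growth`, obtained from the radial case
`radial_growth` by composing with a disk automorphism). It therefore suffices to show
`∫ (1 - ‖z‖)^(-ε) ‖1 - z ζ̄‖^(-(s + 1 - 2 ε)) dμ(z) = O((1 - ‖ζ‖)^(-(1 - ε)))`, which is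
`carleson_forelli_rudin`.

For `(1 - ‖z‖)^(s - 2) dA` in place of `μ` this is the classical Forelli–Rudin estimate
(`forelli_rudin`), proved in polar coordinates from `‖1 - x e^{iθ}‖ ≥ ((1 - x) + |θ|) / 8`. The
passage to `μ` is an averaging argument (`averaging`): the integrand at `z` is comparable to its
mean over the disk of radius `κ (1 - ‖z‖)` about `z`, and after exchanging the order of integration
each `w` is weighted by `μ (pD w r)`, which the Carleson condition bounds by
`C (1 - ‖w‖²)^s`.
-/

open MeasureTheory Metric Filter Complex Set
open scoped ENNReal NNReal Topology

/-- The normalized area measure on `ℂ`. -/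
noncomputable def dA : Measure ℂ := (ENNReal.ofReal Real.pi)⁻¹ • volume

/-- The standard weight `ω_a(z) = (1+a)(1-|z|²)^a`. -/
noncomputable def stdW (a : ℝ) (z : ℂ) : ℝ := (1 + a) * (1 - ‖z‖ ^ 2) ^ a

/-- The weighted `L^p` (quasi-)norm over the unit disk. -/
noncomputable def wnorm (p a : ℝ) (f : ℂ → ℂ) : ℝ≥0∞ :=
  (∫⁻ z in ball (0 : ℂ) 1, ENNReal.ofReal (‖f z‖ ^ p * stdW a z) ∂dA) ^ (1 / p)

/-- The pseudohyperbolic disk `D(z,r)`. -/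
def pD (z : ℂ) (r : ℝ) : Set ℂ :=
  {w | w ∈ ball (0 : ℂ) 1 ∧ ‖(z - w) / (1 - (starRingEnd ℂ) z * w)‖ < r}

/-- The Toeplitz operator `T_{μ,b}`. -/
noncomputable def Toep (μ : Measure ℂ) (b : ℝ) (f : ℂ → ℂ) (z : ℂ) : ℂ :=
  ∫ w in ball (0 : ℂ) 1, f w / (1 - z * (starRingEnd ℂ) w) ^ (((2 + b : ℝ)) : ℂ) ∂μ

/-- The Bloch norm. -/
noncomputable def blochNorm (g : ℂ → ℂ) : ℝ :=
  ‖g 0‖ + sSup ((fun z => (1 - ‖z‖ ^ 2) * ‖deriv g z‖) '' ball (0 : ℂ) 1)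

/-- Membership in the Bloch space. -/
def MemBloch (g : ℂ → ℂ) : Prop :=
  DifferentiableOn ℂ g (ball (0 : ℂ) 1) ∧
    BddAbove ((fun z => (1 - ‖z‖ ^ 2) * ‖deriv g z‖) '' ball (0 : ℂ) 1)

/-! ### The Forelli–Rudin estimate for area measure -/

theorem lintegral_Ioo_rpow {c h : ℝ} (hc : -1 < c) (hh : 0 < h) :
    ∫⁻ u in Ioo 0 h, ENNReal.ofReal (u ^ c) = ENNReal.ofReal (h ^ (c + 1) / (c + 1)) := by
  have hi : IntegrableOn (fun u : ℝ => u ^ c) (Ioc 0 h) :=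
    (intervalIntegrable_iff_integrableOn_Ioc_of_le hh.le).1
      (intervalIntegral.intervalIntegrable_rpow' hc)
  rw [restrict_Ioo_eq_restrict_Ioc, ← ofReal_integral_eq_lintegral_ofReal hi,
    ← intervalIntegral.integral_of_le hh.le, integral_rpow (Or.inl hc),
    Real.zero_rpow (by linarith), sub_zero]
  filter_upwards [ae_restrict_mem measurableSet_Ioc] with u hu
  exact Real.rpow_nonneg hu.1.le _

theorem lintegral_Ioi_rpow {m h : ℝ} (hm : 0 < m) (hh : 0 < h) :
    ∫⁻ u in Ioi h, ENNReal.ofReal (u ^ (-1 - m)) = ENNReal.ofReal (h ^ (-m) / m) := by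
  rw [← ofReal_integral_eq_lintegral_ofReal (integrableOn_Ioi_rpow_of_lt (by linarith) hh),
    integral_Ioi_rpow_of_lt (by linarith) hh]
  · congr 1
    rw [show -1 - m + 1 = -m by ring, neg_div_neg_eq]
  · filter_upwards [ae_restrict_mem measurableSet_Ioi] with u hu
    exact Real.rpow_nonneg (hh.trans hu).le _

/-- Angular part of the Forelli–Rudin estimate; `A` plays the role of the distance `1 - r ρ`. -/
theorem lintegral_angle {m A : ℝ} (hm : 0 < m) (hA : 0 < A) :
    ∫⁻ θ : ℝ, ENNReal.ofReal ((A + |θ|) ^ (-1 - m)) ≤ ENNReal.ofReal (2 * (A ^ (-m) / m)) := by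
  have key : ∫⁻ θ in Ioi (0 : ℝ), ENNReal.ofReal ((A + |θ|) ^ (-1 - m))
      = ENNReal.ofReal (A ^ (-m) / m) := by
    rw [← lintegral_Ioi_rpow hm hA,
      ← (measurePreserving_add_left (volume : Measure ℝ) A).setLIntegral_comp_preimage_emb
        (measurableEmbedding_addLeft A) (fun u => ENNReal.ofReal (u ^ (-1 - m))) (Ioi A)]
    have : (fun x : ℝ => A + x) ⁻¹' Ioi A = Ioi 0 := by ext; simp
    rw [this]
    refine setLIntegral_congr_fun measurableSet_Ioi fun θ hθ => ?_
    simp only [abs_of_pos (mem_Ioi.1 hθ)]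
  have key2 : ∫⁻ θ in Iic (0 : ℝ), ENNReal.ofReal ((A + |θ|) ^ (-1 - m))
      = ENNReal.ofReal (A ^ (-m) / m) := by
    rw [← key, ← restrict_Iio_eq_restrict_Iic,
      ← (Measure.measurePreserving_neg (volume : Measure ℝ)).setLIntegral_comp_preimage_emb
        (MeasurableEquiv.neg ℝ).measurableEmbedding _ (Ioi 0)]
    have : (Neg.neg : ℝ → ℝ) ⁻¹' Ioi 0 = Iio 0 := by ext; simp
    rw [this]
    simp only [abs_neg]
  rw [← lintegral_add_compl _ (measurableSet_Iic (a := (0 : ℝ))), compl_Iic, key, key2,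
    ← ENNReal.ofReal_add (by positivity) (by positivity), two_mul]

/-- Radial part of the Forelli–Rudin estimate. With `u = 1 - r`, the quantity `1 - r ρ` is at least
`h` and at least `u`; the first bound is used for `u ≤ h`, the second for `u > h`. -/
theorem lintegral_radial {c m h ρ : ℝ} (hc : -1 < c) (hm : 0 < m) (hρ0 : 0 ≤ ρ) (hρ : ρ < 1)
    (hh : h = 1 - ρ) :
    ∫⁻ r in Ioo (0 : ℝ) 1, ENNReal.ofReal ((1 - r) ^ c * (1 - r * ρ) ^ (-(c + 1 + m)))
      ≤ ENNReal.ofReal ((1 / (c + 1) + 1 / m) * h ^ (-m)) := by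
  have hpos : 0 < h := by linarith
  have e1 : ∫⁻ r in Ioo (0 : ℝ) 1, ENNReal.ofReal ((1 - r) ^ c * (1 - r * ρ) ^ (-(c + 1 + m)))
      = ∫⁻ u in Ioo (0 : ℝ) 1,
          ENNReal.ofReal (u ^ c * (1 - (1 - u) * ρ) ^ (-(c + 1 + m))) := by
    rw [← (Measure.measurePreserving_sub_left (volume : Measure ℝ) 1).setLIntegral_comp_preimage_emb
        (MeasurableEquiv.subLeft (1 : ℝ)).measurableEmbedding _ (Ioo 0 1)]
    have : (fun t : ℝ => 1 - t) ⁻¹' Ioo 0 1 = Ioo 0 1 := by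
      ext x; simp only [mem_preimage, mem_Ioo]; constructor <;> rintro ⟨_, _⟩ <;> constructor <;> linarith
    rw [this]
    simp
  rw [e1]
  have hsub : Ioo (0 : ℝ) 1 ⊆ Ioc 0 h ∪ Ioc h 1 := fun u hu => by
    rcases le_or_gt u h with h1 | h1
    · exact Or.inl ⟨hu.1, h1⟩
    · exact Or.inr ⟨h1, hu.2.le⟩
  have hsub2 : ∫⁻ u in Ioo (0 : ℝ) 1,
        ENNReal.ofReal (u ^ c * (1 - (1 - u) * ρ) ^ (-(c + 1 + m)))
      ≤ (∫⁻ u in Ioc 0 h, ENNReal.ofReal (u ^ c * (1 - (1 - u) * ρ) ^ (-(c + 1 + m))))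
        + ∫⁻ u in Ioc h 1, ENNReal.ofReal (u ^ c * (1 - (1 - u) * ρ) ^ (-(c + 1 + m))) :=
    (lintegral_mono_set hsub).trans (lintegral_union_le _ _ _)
  refine hsub2.trans ?_
  have b1 : ∫⁻ u in Ioc 0 h, ENNReal.ofReal (u ^ c * (1 - (1 - u) * ρ) ^ (-(c + 1 + m)))
      ≤ ENNReal.ofReal (h ^ (-(c + 1 + m)) * (h ^ (c + 1) / (c + 1))) := by
    rw [ENNReal.ofReal_mul (by positivity), ← lintegral_Ioo_rpow hc hpos,
      ← lintegral_const_mul' _ _ ENNReal.ofReal_ne_top, restrict_Ioo_eq_restrict_Ioc]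
    refine setLIntegral_mono' measurableSet_Ioc fun u hu => ?_
    rw [← ENNReal.ofReal_mul (by positivity), mul_comm]
    refine ENNReal.ofReal_le_ofReal ?_
    refine mul_le_mul_of_nonneg_right ?_ (Real.rpow_nonneg hu.1.le _)
    refine Real.rpow_le_rpow_of_nonpos hpos ?_ (by linarith)
    nlinarith [mul_nonneg hu.1.le hρ0]
  have b2 : ∫⁻ u in Ioc h 1, ENNReal.ofReal (u ^ c * (1 - (1 - u) * ρ) ^ (-(c + 1 + m)))
      ≤ ENNReal.ofReal (h ^ (-m) / m) := by
    rw [← lintegral_Ioi_rpow hm hpos]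
    refine (setLIntegral_mono' measurableSet_Ioc fun u hu => ?_).trans
      (lintegral_mono_set Ioc_subset_Ioi_self)
    have hu0 : 0 < u := hpos.trans hu.1
    refine ENNReal.ofReal_le_ofReal ?_
    rw [show -1 - m = c + -(c + 1 + m) by ring, Real.rpow_add hu0]
    refine mul_le_mul_of_nonneg_left ?_ (Real.rpow_nonneg hu0.le _)
    refine Real.rpow_le_rpow_of_nonpos hu0 ?_ (by linarith)
    nlinarith [mul_nonneg (sub_nonneg.2 hρ.le) (sub_nonneg.2 hu.2)]
  refine (add_le_add b1 b2).trans ?_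
  rw [← ENNReal.ofReal_add (by have : 0 < c + 1 := by linarith
                               positivity) (by positivity)]
  refine ENNReal.ofReal_le_ofReal (le_of_eq ?_)
  rw [mul_div_assoc', ← Real.rpow_add hpos]
  rw [show -(c + 1 + m) + (c + 1) = -m by ring]
  ring

/-- On the circle of radius `x ≤ 1`, for `|θ| ≤ π`, the distance to `1` dominates
`(1 - x) + |θ|`, up to a constant factor. -/
theorem angle_lower {x θ : ℝ} (hx0 : 0 ≤ x) (hx : x ≤ 1) (hθ : |θ| ≤ Real.pi) :
    ((1 - x) + |θ|) / 8 ≤ ‖1 - (x : ℂ) * Complex.exp (Complex.I * θ)‖ := by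
  set N := ‖1 - (x : ℂ) * Complex.exp (Complex.I * θ)‖
  have h1 : 1 - x ≤ N := by
    have := norm_sub_norm_le (1 : ℂ) ((x : ℂ) * Complex.exp (Complex.I * θ))
    rw [norm_mul, mul_comm Complex.I, Complex.norm_exp_ofReal_mul_I] at this
    simpa [abs_of_nonneg hx0, mul_comm Complex.I, N] using this
  have h2 : ‖Complex.exp (Complex.I * θ) - 1‖ ≤ N + (1 - x) := by
    have : Complex.exp (Complex.I * θ) - 1 = -(1 - (x : ℂ) * Complex.exp (Complex.I * θ))
        + ((1 - x : ℝ) : ℂ) * Complex.exp (Complex.I * θ) := by push_cast; ring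
    rw [this]
    refine (norm_add_le _ _).trans ?_
    rw [norm_neg, norm_mul, mul_comm Complex.I, Complex.norm_exp_ofReal_mul_I, Complex.norm_real,
      Real.norm_of_nonneg (by linarith), mul_one]
    simp [N, mul_comm Complex.I]
  have h3 : |θ| / 2 ≤ ‖Complex.exp (Complex.I * θ) - 1‖ := by
    rw [Complex.norm_exp_I_mul_ofReal_sub_one, Real.norm_eq_abs, abs_mul, abs_two]
    have hs : 2 / Real.pi * (|θ| / 2) ≤ Real.sin (|θ| / 2) :=
      Real.mul_le_sin (by positivity) (by linarith)
    have : |Real.sin (θ / 2)| ≥ Real.sin (|θ| / 2) := by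
      rcases abs_cases θ with ⟨h, _⟩ | ⟨h, _⟩ <;> rw [h]
      · exact le_abs_self _
      · rw [neg_div, Real.sin_neg]; exact neg_le_abs _
    have h4 : |θ| / 4 ≤ 2 / Real.pi * (|θ| / 2) := by
      have : 1 / 2 ≤ 2 / Real.pi := by
        rw [div_le_div_iff₀ (by norm_num) Real.pi_pos]; linarith [Real.pi_le_four]
      nlinarith [abs_nonneg θ]
    linarith
  linarith

/-- The Forelli–Rudin estimate when the parameter is a real number in `[0, 1)`, computed in polar
coordinates. -/
theorem forelli_rudin_real {c m ρ : ℝ} (hc : -1 < c) (hm : 0 < m) (hρ0 : 0 ≤ ρ) (hρ : ρ < 1) :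
    ∫⁻ w in ball (0 : ℂ) 1, ENNReal.ofReal ((1 - ‖w‖) ^ c * ‖1 - w * ρ‖ ^ (-(c + 2 + m)))
      ≤ ENNReal.ofReal (8 ^ (c + 2 + m) * (2 / (c + 1 + m)) * (1 / (c + 1) + 1 / m)
          * (1 - ρ) ^ (-m)) := by
  have hm' : 0 < c + 1 + m := by linarith
  have hq : 0 < c + 2 + m := by linarith
  have hc1 : 0 < c + 1 := by linarith
  rw [← lintegral_indicator measurableSet_ball, ← Complex.lintegral_comp_polarCoord_symm]
  -- `F` dominates the polar integrand; the Jacobian `r ≤ 1` is dropped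
  set F : ℝ × ℝ → ℝ≥0∞ := fun q => (Ioo (0 : ℝ) 1).indicator
    (fun r => ENNReal.ofReal (8 ^ (c + 2 + m) * (1 - r) ^ c)) q.1
      * ENNReal.ofReal (((1 - q.1 * ρ) + |q.2|) ^ (-1 - (c + 1 + m))) with hF
  have hFm : Measurable F := by
    refine Measurable.mul ?_ ?_
    · refine Measurable.comp (g := (Ioo (0 : ℝ) 1).indicator _) ?_ measurable_fst
      refine Measurable.indicator ?_ measurableSet_Ioo
      fun_prop
    · fun_prop
  have step : ∫⁻ q in _root_.polarCoord.target, ENNReal.ofReal q.1 •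
        (ball (0 : ℂ) 1).indicator (fun w => ENNReal.ofReal ((1 - ‖w‖) ^ c *
          ‖1 - w * ρ‖ ^ (-(c + 2 + m)))) (Complex.polarCoord.symm q)
      ≤ ∫⁻ q, F q := by
    refine le_trans (setLIntegral_mono' _root_.polarCoord.open_target.measurableSet ?_)
      (setLIntegral_le_lintegral _ _)
    rintro ⟨r, θ⟩ hq'
    rw [polarCoord_target] at hq'
    obtain ⟨hr, hθ⟩ := hq'
    simp only [mem_Ioi, mem_Ioo] at hr hθ
    have hexp : Complex.polarCoord.symm (r, θ) = (r : ℂ) * Complex.exp (Complex.I * θ) := by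
      rw [Complex.polarCoord_symm_apply, mul_comm Complex.I, Complex.exp_mul_I]
      push_cast; rfl
    have hnorm : ‖(r : ℂ) * Complex.exp (Complex.I * θ)‖ = r := by
      rw [norm_mul, mul_comm Complex.I, Complex.norm_exp_ofReal_mul_I, mul_one, Complex.norm_real,
        Real.norm_of_nonneg hr.le]
    rw [hexp]
    by_cases h1 : r < 1
    · rw [indicator_of_mem (by rw [mem_ball_zero_iff, hnorm]; exact h1)]
      simp only [hF, indicator_of_mem (show r ∈ Ioo (0 : ℝ) 1 from ⟨hr, h1⟩), hnorm, smul_eq_mul]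
      have hrρ : r * ρ < 1 := by nlinarith
      have hr1 : 0 ≤ (1 - r) ^ c := Real.rpow_nonneg (by linarith) _
      rw [← ENNReal.ofReal_mul hr.le, ← ENNReal.ofReal_mul (mul_nonneg (by positivity) hr1)]
      refine ENNReal.ofReal_le_ofReal ?_
      have hlow := angle_lower (x := r * ρ) (θ := θ) (by positivity) hrρ.le
        (abs_le.2 ⟨hθ.1.le, hθ.2.le⟩)
      have hA : 0 < (1 - r * ρ) + |θ| := by have := abs_nonneg θ; linarith
      have e : (r : ℂ) * Complex.exp (Complex.I * θ) * ρ
          = ((r * ρ : ℝ) : ℂ) * Complex.exp (Complex.I * θ) := by push_cast; ring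
      rw [e]
      have := Real.rpow_le_rpow_of_nonpos (by positivity) hlow
        (show -(c + 2 + m) ≤ 0 by linarith)
      rw [Real.div_rpow hA.le (by norm_num), Real.rpow_neg (by norm_num : (0 : ℝ) ≤ 8),
        div_inv_eq_mul] at this
      have h2 := mul_le_mul_of_nonneg_left this hr1
      rw [show -1 - (c + 1 + m) = -(c + 2 + m) by ring]
      calc _ ≤ 1 * ((1 - r) ^ c * ‖1 - ((r * ρ : ℝ) : ℂ) * Complex.exp (Complex.I * θ)‖
            ^ (-(c + 2 + m))) :=
            mul_le_mul_of_nonneg_right h1.le (by positivity)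
        _ ≤ _ := by rw [one_mul]; refine h2.trans (le_of_eq ?_); ring
    · rw [indicator_of_notMem (by rw [mem_ball_zero_iff, hnorm]; exact h1)]
      simp
  refine step.trans ?_
  rw [Measure.volume_eq_prod, lintegral_prod _ hFm.aemeasurable]
  have inner : ∀ r : ℝ, ∫⁻ θ, F (r, θ) ≤ (Ioo (0 : ℝ) 1).indicator (fun r => 
      ENNReal.ofReal (8 ^ (c + 2 + m) * (2 / (c + 1 + m))) *
        ENNReal.ofReal ((1 - r) ^ c * (1 - r * ρ) ^ (-(c + 1 + m)))) r := by
    intro r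
    by_cases h : r ∈ Ioo (0 : ℝ) 1
    · have hrρ : 0 < 1 - r * ρ := by nlinarith [h.1, h.2]
      have hr1 : 0 ≤ (1 - r) ^ c := Real.rpow_nonneg (by linarith [h.2]) _
      simp only [hF, indicator_of_mem h]
      rw [lintegral_const_mul' _ _ ENNReal.ofReal_ne_top]
      refine (mul_le_mul_right (lintegral_angle hm' hrρ) _).trans (le_of_eq ?_)
      rw [← ENNReal.ofReal_mul (by positivity), ← ENNReal.ofReal_mul (by positivity)]
      congr 1
      ring
    · simp [hF, indicator_of_notMem h]
  refine (lintegral_mono inner).trans ?_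
  rw [lintegral_indicator measurableSet_Ioo, lintegral_const_mul' _ _ ENNReal.ofReal_ne_top]
  refine (mul_le_mul_right (lintegral_radial hc hm hρ0 hρ rfl) _).trans (le_of_eq ?_)
  rw [← ENNReal.ofReal_mul (by positivity)]
  congr 1
  ring

/-- The Forelli–Rudin estimate: for `c > -1` and `m > 0`, the integral of
`(1 - ‖w‖)^c / ‖1 - w ζ̄‖^(c + 2 + m)` over the disk is `O((1 - ‖ζ‖)^(-m))`. -/
theorem forelli_rudin {c m : ℝ} (hc : -1 < c) (hm : 0 < m) :
    ∃ K : ℝ, 0 ≤ K ∧ ∀ ζ ∈ ball (0 : ℂ) 1,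
      ∫⁻ w in ball (0 : ℂ) 1, ENNReal.ofReal
          ((1 - ‖w‖) ^ c * ‖1 - w * (starRingEnd ℂ) ζ‖ ^ (-(c + 2 + m)))
        ≤ ENNReal.ofReal (K * (1 - ‖ζ‖) ^ (-m)) := by
  have hm' : 0 < c + 1 + m := by linarith
  have hc1 : 0 < c + 1 := by linarith
  refine ⟨8 ^ (c + 2 + m) * (2 / (c + 1 + m)) * (1 / (c + 1) + 1 / m), by positivity, ?_⟩
  intro ζ hζ
  refine le_trans (le_of_eq ?_) (forelli_rudin_real hc hm (norm_nonneg ζ) (mem_ball_zero_iff.1 hζ))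
  -- rotate so that `ζ` becomes the positive radius `‖ζ‖`
  set R : ℂ ≃ₗᵢ[ℝ] ℂ := rotation (Circle.exp ζ.arg)
  rw [← (R.measurePreserving).setLIntegral_comp_preimage_emb
    R.toHomeomorph.measurableEmbedding _ (ball (0 : ℂ) 1)]
  have hpre : R ⁻¹' ball (0 : ℂ) 1 = ball 0 1 := by ext; simp
  rw [hpre]
  refine lintegral_congr fun w => ?_
  rw [R.norm_map]
  have : R w * (starRingEnd ℂ) ζ = w * ‖ζ‖ := by
    conv_lhs => rw [← Complex.norm_mul_exp_arg_mul_I ζ]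
    rw [map_mul, Complex.conj_ofReal, rotation_apply, Circle.coe_exp, ← Complex.exp_conj]
    rw [show ∀ a b c d : ℂ, a * b * (c * d) = (b * c) * (a * d) by intros; ring, ← Complex.exp_add]
    simp
  rw [this]

/-! ### Averaging over Carleson disks -/

theorem mem_pD_of_close {z w : ℂ} {κ r : ℝ} (hκr : κ ≤ r) (hr : r ≤ 1)
    (hz : z ∈ ball (0 : ℂ) 1) (h : ‖z - w‖ < κ * (1 - ‖z‖)) : w ∈ ball (0 : ℂ) 1 ∧ z ∈ pD w r := by
  rw [mem_ball_zero_iff] at *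
  have hz' : 0 < 1 - ‖z‖ := by linarith
  have hw : ‖w‖ < 1 := by
    have := norm_sub_norm_le w z
    rw [norm_sub_rev] at this
    nlinarith
  refine ⟨hw, mem_ball_zero_iff.2 hz, ?_⟩
  have hden : 1 - ‖z‖ ≤ ‖1 - (starRingEnd ℂ) w * z‖ := by
    have := norm_sub_norm_le (1 : ℂ) ((starRingEnd ℂ) w * z)
    rw [norm_mul, RCLike.norm_conj, norm_one] at this
    nlinarith [norm_nonneg z, norm_nonneg w]
  rw [norm_div, div_lt_iff₀ (by linarith), norm_sub_rev]
  have : 0 ≤ r := by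
    by_contra hneg
    nlinarith [norm_nonneg (z - w)]
  nlinarith

/-- A measure giving finite mass to the pseudohyperbolic disks of one fixed radius is finite on
compact subsets of the disk, hence σ-finite there. -/
theorem sigmaFinite_of_carleson {μ : Measure ℂ} {r : ℝ} (hr0 : 0 < r) (hr1 : r < 1)
    (hμ : ∀ z ∈ ball (0 : ℂ) 1, μ (pD z r) < ∞) : SigmaFinite (μ.restrict (ball (0 : ℂ) 1)) := by
  -- the complement of the disk is a null set for the restriction, so it may join every piece
  refine ⟨⟨⟨fun n => closedBall 0 (1 - 1 / ((n : ℝ) + 1)) ∪ (ball 0 1)ᶜ, fun _ => trivial,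
    fun n => ?_, ?_⟩⟩⟩
  · have hsub : closedBall (0 : ℂ) (1 - 1 / ((n : ℝ) + 1)) ⊆ ball 0 1 :=
      closedBall_subset_ball (by have : (0 : ℝ) < 1 / ((n : ℝ) + 1) := by positivity
                                 linarith)
    rw [Measure.restrict_apply (isClosed_closedBall.measurableSet.union
      measurableSet_ball.compl), union_inter_distrib_right, compl_inter_self, union_empty]
    refine (measure_mono inter_subset_left).trans_lt ?_
    refine (isCompact_closedBall _ _).measure_lt_top_of_nhdsWithin fun z hz => ?_
    have hz1 := mem_ball_zero_iff.1 (hsub hz)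
    refine ⟨pD z r, ?_, hμ z (hsub hz)⟩
    refine mem_nhdsWithin_of_mem_nhds ?_
    have hcont : ContinuousAt (fun w : ℂ => ‖(z - w) / (1 - (starRingEnd ℂ) z * w)‖) z := by
      have : 1 - (starRingEnd ℂ) z * z ≠ 0 := by
        intro h
        have h2 : (starRingEnd ℂ) z * z = 1 := (sub_eq_zero.1 h).symm
        have h3 := congrArg norm h2
        rw [norm_mul, RCLike.norm_conj, norm_one] at h3
        nlinarith [norm_nonneg z]
      fun_prop (disch := assumption)
    filter_upwards [isOpen_ball.mem_nhds (hsub hz),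
      hcont.eventually (gt_mem_nhds (show _ < r by simpa using hr0))] with w h1 h2
    exact ⟨h1, h2⟩
  · refine eq_univ_of_forall fun z => mem_iUnion.2 ?_
    by_cases hz : z ∈ ball (0 : ℂ) 1
    · have hz1 := mem_ball_zero_iff.1 hz
      obtain ⟨n, hn⟩ := exists_nat_one_div_lt (sub_pos.2 hz1)
      exact ⟨n, Or.inl (mem_closedBall_zero_iff.2 (by linarith))⟩
    · exact ⟨0, Or.inr hz⟩

/-- Averaging over Euclidean disks of radius `κ (1 - ‖z‖)`: if `F z / (1 - ‖z‖)²` is at most `G` on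
the disk about `z`, the integral of `F` against `μ` is dominated by the area integral of `G`
weighted by the `μ`-mass of pseudohyperbolic disks. -/
theorem averaging {μ : Measure ℂ} {r κ : ℝ} (hκ : 0 < κ) (hκr : κ ≤ r) (hr1 : r < 1)
    (hμ : ∀ z ∈ ball (0 : ℂ) 1, μ (pD z r) < ∞) (F G : ℂ → ℝ≥0∞) (hG : Measurable G)
    (h : ∀ z ∈ ball (0 : ℂ) 1, ∀ w, ‖z - w‖ < κ * (1 - ‖z‖) →
      F z ≤ G w * ENNReal.ofReal ((1 - ‖z‖) ^ 2)) :
    ENNReal.ofReal (Real.pi * κ ^ 2) * ∫⁻ z in ball (0 : ℂ) 1, F z ∂μ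
      ≤ ∫⁻ w in ball (0 : ℂ) 1, G w * μ (pD w r) := by
  have := sigmaFinite_of_carleson (hκ.trans_le hκr) hr1 hμ
  set S : Set (ℂ × ℂ) := {q | ‖q.1 - q.2‖ < κ * (1 - ‖q.1‖)} with hS
  have hSm : MeasurableSet S := measurableSet_lt (by fun_prop) (by fun_prop)
  have hfm : Measurable (fun q : ℂ × ℂ => S.indicator (fun q => G q.2) q) :=
    (hG.comp measurable_snd).indicator hSm
  have e1 : ∀ z ∈ ball (0 : ℂ) 1, ENNReal.ofReal (Real.pi * κ ^ 2) * F z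
      ≤ ∫⁻ w, S.indicator (fun q => G q.2) (z, w) := by
    intro z hz
    have hz1 : 0 < 1 - ‖z‖ := sub_pos.2 (mem_ball_zero_iff.1 hz)
    have hvol : volume (ball z (κ * (1 - ‖z‖)))
        = ENNReal.ofReal (Real.pi * κ ^ 2) * ENNReal.ofReal ((1 - ‖z‖) ^ 2) := by
      rw [Complex.volume_ball, ← ENNReal.ofReal_pow (by positivity),
        ← ENNReal.ofReal_mul (by positivity)]
      have : (NNReal.pi : ℝ≥0∞) = ENNReal.ofReal Real.pi := by
        rw [ENNReal.ofReal, ← NNReal.coe_real_pi, Real.toNNReal_coe]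
      rw [this, ← ENNReal.ofReal_mul (by positivity)]
      congr 1; ring
    have hne : ENNReal.ofReal ((1 - ‖z‖) ^ 2) ≠ 0 := by simp; positivity
    calc ENNReal.ofReal (Real.pi * κ ^ 2) * F z
        = ∫⁻ w in ball z (κ * (1 - ‖z‖)), F z / ENNReal.ofReal ((1 - ‖z‖) ^ 2) := by
          rw [setLIntegral_const, hvol, ENNReal.div_eq_inv_mul]
          calc _ = ENNReal.ofReal (Real.pi * κ ^ 2) * F z *
                ((ENNReal.ofReal ((1 - ‖z‖) ^ 2))⁻¹ * ENNReal.ofReal ((1 - ‖z‖) ^ 2)) := by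
                rw [ENNReal.inv_mul_cancel hne ENNReal.ofReal_ne_top, mul_one]
            _ = _ := by ring
      _ ≤ ∫⁻ w in ball z (κ * (1 - ‖z‖)), G w := by
          refine setLIntegral_mono' measurableSet_ball fun w hw => ?_
          refine ENNReal.div_le_of_le_mul (h z hz w ?_)
          rwa [mem_ball, dist_comm, dist_eq_norm] at hw
      _ = ∫⁻ w, S.indicator (fun q => G q.2) (z, w) := by
          rw [← lintegral_indicator measurableSet_ball]
          refine lintegral_congr fun w => ?_
          have : w ∈ ball z (κ * (1 - ‖z‖)) ↔ (z, w) ∈ S := by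
            rw [mem_ball, dist_comm, dist_eq_norm]; rfl
          by_cases hw : (z, w) ∈ S
          · rw [indicator_of_mem hw, indicator_of_mem (this.2 hw)]
          · rw [indicator_of_notMem hw, indicator_of_notMem (fun h => hw (this.1 h))]
  rw [← lintegral_const_mul' _ _ ENNReal.ofReal_ne_top]
  refine (setLIntegral_mono' measurableSet_ball e1).trans ?_
  -- σ-finiteness of `μ` on the disk enters here, through Tonelli
  rw [lintegral_lintegral_swap hfm.aemeasurable, ← lintegral_indicator measurableSet_ball]
  refine lintegral_mono fun w => ?_
  have hsec : ∀ z ∈ ball (0 : ℂ) 1, S.indicator (fun q => G q.2) (z, w)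
      ≤ (ball (0 : ℂ) 1).indicator G w * (pD w r).indicator 1 z := by
    intro z hz
    by_cases hw : (z, w) ∈ S
    · obtain ⟨h1, h2⟩ := mem_pD_of_close hκr hr1.le hz hw
      rw [indicator_of_mem hw, indicator_of_mem h1, indicator_of_mem h2]
      simp
    · rw [indicator_of_notMem hw]; exact zero_le
  refine (setLIntegral_mono' measurableSet_ball hsec).trans ?_
  by_cases hw : w ∈ ball (0 : ℂ) 1
  · have hm : MeasurableSet (pD w r) :=
      measurableSet_ball.inter (measurableSet_lt
        (f := fun x : ℂ => ‖(w - x) / (1 - (starRingEnd ℂ) w * x)‖) (g := fun _ => r)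
        (by fun_prop) measurable_const)
    simp only [indicator_of_mem hw]
    rw [lintegral_const_mul _ (measurable_one.indicator hm), lintegral_indicator_one hm]
    gcongr
    exact Measure.restrict_le_self
  · simp [indicator_of_notMem hw]

/-! ### Growth of Bloch functions -/

/-- Radial growth of a holomorphic function whose derivative is `O((1 - ‖w‖²)⁻¹)`. The logarithm
obtained by integrating is replaced by an arbitrarily small negative power. -/
theorem radial_growth {f : ℂ → ℂ} {B ε : ℝ} (hε : 0 < ε) (hB : 0 ≤ B)
    (hf : DifferentiableOn ℂ f (ball 0 1))
    (hd : ∀ w ∈ ball (0 : ℂ) 1, (1 - ‖w‖ ^ 2) * ‖deriv f w‖ ≤ B) {w : ℂ}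
    (hw : w ∈ ball (0 : ℂ) 1) : ‖f w - f 0‖ ≤ B / ε * (1 - ‖w‖) ^ (-ε) := by
  have hw1 := mem_ball_zero_iff.1 hw
  have hn := norm_nonneg w
  have hmem : ∀ t ∈ Icc (0 : ℝ) 1, (t : ℂ) * w ∈ ball (0 : ℂ) 1 := by
    intro t ht
    rw [mem_ball_zero_iff, norm_mul, Complex.norm_real, Real.norm_of_nonneg ht.1]
    nlinarith [ht.1, ht.2]
  have hder : ∀ t ∈ Icc (0 : ℝ) 1,
      HasDerivAt (fun t : ℝ => f (t * w) - f 0) (deriv f (t * w) * w) t := by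
    intro t ht
    have h1 := (hf.differentiableAt (isOpen_ball.mem_nhds (hmem t ht))).hasDerivAt
    have h2 : HasDerivAt (fun t : ℝ => (t : ℂ) * w) w t := by
      simpa using (Complex.ofRealCLM.hasDerivAt (x := t)).mul_const w
    exact (HasDerivAt.comp t h1 h2).sub_const _
  have hpos : ∀ t ∈ Icc (0 : ℝ) 1, 0 < 1 - t * ‖w‖ := fun t ht => by nlinarith [ht.1, ht.2]
  have hBd : ∀ t ∈ Icc (0 : ℝ) 1, HasDerivAt (fun t : ℝ => B / ε * (1 - t * ‖w‖) ^ (-ε))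
      (B * ‖w‖ * (1 - t * ‖w‖) ^ (-ε - 1)) t := by
    intro t ht
    have h1 : HasDerivAt (fun t : ℝ => 1 - t * ‖w‖) (-‖w‖) t := by
      simpa using ((hasDerivAt_id t).mul_const ‖w‖).const_sub 1
    exact ((h1.rpow_const (p := -ε) (Or.inl (hpos t ht).ne')).const_mul (B / ε)).congr_deriv
      (by field_simp)
  have := image_norm_le_of_norm_deriv_right_le_deriv_boundary'
    (f := fun t : ℝ => f (t * w) - f 0) (a := 0) (b := 1)
    (fun t ht => (hder t ht).continuousAt.continuousWithinAt)
    (fun t ht => (hder t (Ico_subset_Icc_self ht)).hasDerivWithinAt)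
    (B := fun t : ℝ => B / ε * (1 - t * ‖w‖) ^ (-ε))
    (by simp; positivity)
    (fun t ht => (hBd t ht).continuousAt.continuousWithinAt)
    (fun t ht => (hBd t (Ico_subset_Icc_self ht)).hasDerivWithinAt)
    (fun t ht => ?_) (right_mem_Icc.2 zero_le_one)
  · simpa using this
  · have ht' := Ico_subset_Icc_self ht
    have hp := hpos t ht'
    have h1 := hd _ (hmem t ht')
    rw [norm_mul, Complex.norm_real, Real.norm_of_nonneg ht'.1] at h1
    have h2 : (1 - t * ‖w‖) * ‖deriv f (t * w)‖ ≤ B := by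
      refine le_trans (mul_le_mul_of_nonneg_right ?_ (norm_nonneg _)) h1
      nlinarith [mul_nonneg ht'.1 hn]
    have h3 : ‖deriv f (t * w)‖ ≤ B * (1 - t * ‖w‖)⁻¹ := by
      rw [← div_eq_mul_inv, le_div_iff₀ hp]; linarith
    have h4 : (1 - t * ‖w‖)⁻¹ ≤ (1 - t * ‖w‖) ^ (-ε - 1) := by
      rw [← Real.rpow_neg_one]
      exact Real.rpow_le_rpow_of_exponent_ge hp (by nlinarith [mul_nonneg ht'.1 hn]) (by linarith)
    rw [norm_mul, mul_right_comm]
    refine mul_le_mul_of_nonneg_right (h3.trans ?_) hn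
    gcongr

theorem moebius_den_pos {ζ w : ℂ} (hζ : ζ ∈ ball (0 : ℂ) 1) (hw : w ∈ ball (0 : ℂ) 1) :
    0 < ‖1 - (starRingEnd ℂ) ζ * w‖ := by
  rw [mem_ball_zero_iff] at *
  have := norm_sub_norm_le (1 : ℂ) ((starRingEnd ℂ) ζ * w)
  rw [norm_mul, RCLike.norm_conj, norm_one] at this
  nlinarith [norm_nonneg ζ, norm_nonneg w]

theorem moebius_identity (ζ w : ℂ) :
    ‖1 - (starRingEnd ℂ) ζ * w‖ ^ 2 - ‖ζ - w‖ ^ 2 = (1 - ‖ζ‖ ^ 2) * (1 - ‖w‖ ^ 2) := by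
  simp only [← Complex.normSq_eq_norm_sq, Complex.normSq_apply]
  simp
  ring

theorem one_sub_moebius {ζ w : ℂ} (hζ : ζ ∈ ball (0 : ℂ) 1) (hw : w ∈ ball (0 : ℂ) 1) :
    1 - ‖(ζ - w) / (1 - (starRingEnd ℂ) ζ * w)‖ ^ 2
      = (1 - ‖ζ‖ ^ 2) * (1 - ‖w‖ ^ 2) / ‖1 - (starRingEnd ℂ) ζ * w‖ ^ 2 := by
  have h := moebius_den_pos hζ hw
  rw [← moebius_identity, norm_div, div_pow, sub_div, div_self (pow_pos h 2).ne']

theorem one_sub_sq_pos {w : ℂ} (hw : w ∈ ball (0 : ℂ) 1) : 0 < 1 - ‖w‖ ^ 2 := by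
  rw [mem_ball_zero_iff] at hw
  nlinarith [norm_nonneg w]

theorem moebius_mem {ζ w : ℂ} (hζ : ζ ∈ ball (0 : ℂ) 1) (hw : w ∈ ball (0 : ℂ) 1) :
    (ζ - w) / (1 - (starRingEnd ℂ) ζ * w) ∈ ball (0 : ℂ) 1 := by
  have h := one_sub_moebius hζ hw
  have h2 : 0 < (1 - ‖ζ‖ ^ 2) * (1 - ‖w‖ ^ 2) / ‖1 - (starRingEnd ℂ) ζ * w‖ ^ 2 :=
    div_pos (mul_pos (one_sub_sq_pos hζ) (one_sub_sq_pos hw)) (pow_pos (moebius_den_pos hζ hw) 2)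
  rw [mem_ball_zero_iff]
  rw [← h] at h2
  nlinarith [norm_nonneg ((ζ - w) / (1 - (starRingEnd ℂ) ζ * w))]

/-- Two-point growth of a Bloch function, from `radial_growth` by Möbius invariance. -/
theorem bloch_growth {g : ℂ → ℂ} {B ε : ℝ} (hε : 0 < ε) (hB : 0 ≤ B)
    (hg : DifferentiableOn ℂ g (ball 0 1))
    (hd : ∀ w ∈ ball (0 : ℂ) 1, (1 - ‖w‖ ^ 2) * ‖deriv g w‖ ≤ B) {z ζ : ℂ}
    (hz : z ∈ ball (0 : ℂ) 1) (hζ : ζ ∈ ball (0 : ℂ) 1) :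
    ‖g z - g ζ‖ ≤ B / ε * 2 ^ ε *
      ((1 - ‖ζ‖ ^ 2) * (1 - ‖z‖ ^ 2) / ‖1 - (starRingEnd ℂ) ζ * z‖ ^ 2) ^ (-ε) := by
  -- the involutive automorphism of the disk exchanging `0` and `ζ`
  set φ : ℂ → ℂ := fun w => (ζ - w) / (1 - (starRingEnd ℂ) ζ * w) with hφ
  have hne : ∀ w ∈ ball (0 : ℂ) 1, 1 - (starRingEnd ℂ) ζ * w ≠ 0 := fun w hw =>
    norm_pos_iff.1 (moebius_den_pos hζ hw)
  have hφd : ∀ w ∈ ball (0 : ℂ) 1,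
      HasDerivAt φ (((‖ζ‖ ^ 2 - 1 : ℝ) : ℂ) / (1 - (starRingEnd ℂ) ζ * w) ^ 2) w := by
    intro w hw
    have h1 : HasDerivAt (fun w : ℂ => ζ - w) (-1) w := (hasDerivAt_id w).const_sub ζ
    have h2 : HasDerivAt (fun w : ℂ => 1 - (starRingEnd ℂ) ζ * w) (-(starRingEnd ℂ) ζ) w := by
      simpa using ((hasDerivAt_id w).const_mul ((starRingEnd ℂ) ζ)).const_sub 1
    refine (h1.div h2 (hne w hw)).congr_deriv ?_
    have : ((‖ζ‖ ^ 2 : ℝ) : ℂ) = (starRingEnd ℂ) ζ * ζ := by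
      rw [← Complex.normSq_eq_norm_sq, Complex.normSq_eq_conj_mul_self]
    rw [ofReal_sub, this]; push_cast; ring_nf
  have hcomp : ∀ w ∈ ball (0 : ℂ) 1, HasDerivAt (g ∘ φ)
      (deriv g (φ w) * (((‖ζ‖ ^ 2 - 1 : ℝ) : ℂ) / (1 - (starRingEnd ℂ) ζ * w) ^ 2)) w :=
    fun w hw => HasDerivAt.comp w
      (hg.differentiableAt (isOpen_ball.mem_nhds (moebius_mem hζ hw))).hasDerivAt (hφd w hw)
  have hinv : φ (φ z) = z := by
    have h1 := hne z hz
    have h2 := hne _ (moebius_mem hζ hz)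
    simp only [hφ]
    rw [div_eq_iff h2]
    have e := div_mul_cancel₀ (ζ - z) h1
    refine mul_right_cancel₀ h1 ?_
    linear_combination (-1 + z * (starRingEnd ℂ) ζ) * e
  have hmain := radial_growth (f := g ∘ φ) hε hB
    (fun w hw => (hcomp w hw).differentiableAt.differentiableWithinAt) (fun w hw => ?_)
    (moebius_mem hζ hz)
  · have e0 : φ 0 = ζ := by simp [hφ]
    have e1 : (g ∘ φ) ((ζ - z) / (1 - (starRingEnd ℂ) ζ * z)) = g z := congrArg g hinv
    rw [e1, Function.comp_apply, e0] at hmain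
    refine hmain.trans ?_
    rw [mul_assoc]
    refine mul_le_mul_of_nonneg_left ?_ (by positivity)
    rw [← one_sub_moebius hζ hz]
    have hm := one_sub_sq_pos (moebius_mem hζ hz)
    have hm1 := mem_ball_zero_iff.1 (moebius_mem hζ hz)
    set x := ‖(ζ - z) / (1 - (starRingEnd ℂ) ζ * z)‖
    have : (1 - x) ^ (-ε) ≤ ((1 - x ^ 2) / 2) ^ (-ε) :=
      Real.rpow_le_rpow_of_nonpos (by linarith)
        (by nlinarith [norm_nonneg ((ζ - z) / (1 - (starRingEnd ℂ) ζ * z))]) (by linarith)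
    rwa [Real.div_rpow hm.le (by norm_num), Real.rpow_neg (by norm_num : (0 : ℝ) ≤ 2),
      div_inv_eq_mul, mul_comm] at this
  · rw [(hcomp w hw).deriv]
    refine le_trans (le_of_eq ?_) (hd _ (moebius_mem hζ hw))
    have : ‖ζ‖ ^ 2 - 1 < 0 := by linarith [one_sub_sq_pos hζ]
    rw [one_sub_moebius hζ hw, norm_mul, norm_div, Complex.norm_real, norm_pow,
      Real.norm_of_nonpos this.le]
    ring

/-! ### Passing from area measure to a Carleson measure -/

/-- The Forelli–Rudin estimate for a Carleson measure `μ` in place of `(1 - ‖w‖)^(s-2) dA`: since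
the integrand is almost constant on each averaging disk, `averaging` bounds its `μ`-integral by an
area integral to which `forelli_rudin` applies with `c = s - 2 - ε` and `m = 1 - ε`. -/
theorem carleson_forelli_rudin {μ : Measure ℂ} {s ε : ℝ} (hε : 0 < ε) (hε1 : ε < 1)
    (hεs : ε < s - 1)
    (hμ : ∃ r ∈ Set.Ioo (0 : ℝ) 1, ∃ C : ℝ, ∀ z ∈ ball (0 : ℂ) 1,
      μ (pD z r) ≤ ENNReal.ofReal (C * (1 - ‖z‖ ^ 2) ^ s)) :
    ∃ K : ℝ, 0 ≤ K ∧ ∀ ζ ∈ ball (0 : ℂ) 1,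
      ∫⁻ z in ball (0 : ℂ) 1, ENNReal.ofReal
          ((1 - ‖z‖) ^ (-ε) * ‖1 - z * (starRingEnd ℂ) ζ‖ ^ (-(s + 1 - 2 * ε))) ∂μ
        ≤ ENNReal.ofReal (K * (1 - ‖ζ‖) ^ (-(1 - ε))) := by
  obtain ⟨r, ⟨hr0, hr1⟩, C, hC⟩ := hμ
  obtain ⟨K, hK0, hK⟩ := forelli_rudin (c := s - 2 - ε) (m := 1 - ε) (by linarith) (by linarith)
  set Q := s + 1 - 2 * ε with hQdef
  have hQ : 0 < Q := by linarith
  -- the exponent `c + 2 + m` of `forelli_rudin` for these `c` and `m`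
  have hQe : s - 2 - ε + 2 + (1 - ε) = Q := by rw [hQdef]; ring
  rw [hQe] at hK
  -- the averaging radius must be at most `r` (to land in `pD w r`) and at most `1 / 2` (for `a2`)
  set κ := r / 2 with hκ
  -- `K₁` absorbs the variation of the integrand over one averaging disk
  set K₁ : ℝ := 2 ^ (2 + ε) * 2 ^ Q with hK₁
  set K₂ : ℝ := K₁ * (max C 0 * 2 ^ s) with hK₂
  have hK₂0 : 0 ≤ K₂ := by positivity
  refine ⟨(Real.pi * κ ^ 2)⁻¹ * (K₂ * K), by positivity, fun ζ hζ => ?_⟩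
  set N : ℂ → ℝ := fun w => ‖1 - w * (starRingEnd ℂ) ζ‖ with hN
  have hζ1 := mem_ball_zero_iff.1 hζ
  have hNlow : ∀ z ∈ ball (0 : ℂ) 1, 1 - ‖z‖ ≤ N z := by
    intro z hz
    have h1 := norm_sub_norm_le (1 : ℂ) (z * (starRingEnd ℂ) ζ)
    rw [norm_mul, RCLike.norm_conj, norm_one] at h1
    refine le_trans ?_ h1
    nlinarith [norm_nonneg z]
  set G : ℂ → ℝ≥0∞ := fun w => ENNReal.ofReal (K₁ * ((1 - ‖w‖) ^ (-2 - ε) * N w ^ (-Q))) with hG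
  have hGm : Measurable G := by fun_prop
  have hav := averaging (μ := μ) (κ := κ) (by positivity) (by linarith) hr1
    (fun z hz => (hC z hz).trans_lt ENNReal.ofReal_lt_top)
    (fun z => ENNReal.ofReal ((1 - ‖z‖) ^ (-ε) * N z ^ (-Q))) G hGm ?_
  · have hbd : ∫⁻ w in ball (0 : ℂ) 1, G w * μ (pD w r)
        ≤ ENNReal.ofReal (K₂ * K * (1 - ‖ζ‖) ^ (-(1 - ε))) := by
      rw [mul_assoc, ENNReal.ofReal_mul hK₂0]
      refine le_trans ?_ (mul_le_mul_right (hK ζ hζ) _)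
      rw [← lintegral_const_mul' _ _ ENNReal.ofReal_ne_top]
      refine setLIntegral_mono' measurableSet_ball fun w hw => ?_
      have hw1 : 0 < 1 - ‖w‖ := sub_pos.2 (mem_ball_zero_iff.1 hw)
      refine (mul_le_mul_right (hC w hw) _).trans ?_
      rw [← ENNReal.ofReal_mul (by positivity), ← ENNReal.ofReal_mul hK₂0]
      refine ENNReal.ofReal_le_ofReal ?_
      -- `C` may be negative, hence `max C 0`
      have h1 : C * (1 - ‖w‖ ^ 2) ^ s ≤ max C 0 * (2 ^ s * (1 - ‖w‖) ^ s) := by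
        rw [← Real.mul_rpow (by norm_num) hw1.le]
        refine mul_le_mul (le_max_left _ _) ?_ (Real.rpow_nonneg (one_sub_sq_pos hw).le _)
          (le_max_right _ _)
        exact Real.rpow_le_rpow (one_sub_sq_pos hw).le (by nlinarith [norm_nonneg w])
          (by linarith)
      refine (mul_le_mul_of_nonneg_left h1 (by positivity)).trans (le_of_eq ?_)
      rw [show s - 2 - ε = (-2 - ε) + s by ring, Real.rpow_add hw1, hK₂]
      ring
    have := hav.trans hbd
    have hp : 0 < Real.pi * κ ^ 2 := by positivity
    rw [mul_assoc, ENNReal.ofReal_mul (by positivity), ENNReal.ofReal_inv_of_pos hp]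
    rw [mul_comm (ENNReal.ofReal _)⁻¹, ← div_eq_mul_inv, ENNReal.le_div_iff_mul_le
      (Or.inl (ENNReal.ofReal_pos.2 hp).ne') (Or.inl ENNReal.ofReal_ne_top), mul_comm]
    simpa only [mul_assoc] using this
  · intro z hz w hzw
    have hz1 : 0 < 1 - ‖z‖ := sub_pos.2 (mem_ball_zero_iff.1 hz)
    have hw := (mem_pD_of_close (by linarith : κ ≤ r) hr1.le hz hzw).1
    have hw1 : 0 < 1 - ‖w‖ := sub_pos.2 (mem_ball_zero_iff.1 hw)
    have hzw' : ‖z - w‖ ≤ (1 - ‖z‖) / 2 := by nlinarith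
    have hNz : 0 < N z := hz1.trans_le (hNlow z hz)
    have hNw : 0 < N w := hw1.trans_le (hNlow w hw)
    rw [← ENNReal.ofReal_mul (by positivity)]
    refine ENNReal.ofReal_le_ofReal ?_
    have a1 : (1 - ‖w‖) / 2 ≤ 1 - ‖z‖ := by
      have := norm_sub_norm_le z w
      linarith
    have a2 : N w / 2 ≤ N z := by
      have h1 : N w ≤ N z + ‖z - w‖ := by
        have e : 1 - w * (starRingEnd ℂ) ζ = (1 - z * (starRingEnd ℂ) ζ)
          + (z - w) * (starRingEnd ℂ) ζ := by ring
        simp only [hN]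
        rw [e]
        refine (norm_add_le _ _).trans (add_le_add_right ?_ _)
        rw [norm_mul, RCLike.norm_conj]
        exact mul_le_of_le_one_right (norm_nonneg _) hζ1.le
      linarith [hNlow z hz]
    have b1 : (1 - ‖z‖) ^ (-2 - ε) ≤ 2 ^ (2 + ε) * (1 - ‖w‖) ^ (-2 - ε) := by
      refine (Real.rpow_le_rpow_of_nonpos (by positivity) a1 (by linarith)).trans (le_of_eq ?_)
      rw [Real.div_rpow hw1.le (by norm_num), show -2 - ε = -(2 + ε) by ring,
        Real.rpow_neg (by norm_num : (0 : ℝ) ≤ 2), div_inv_eq_mul, mul_comm]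
    have b2 : N z ^ (-Q) ≤ 2 ^ Q * N w ^ (-Q) := by
      refine (Real.rpow_le_rpow_of_nonpos (by positivity) a2 (by linarith)).trans (le_of_eq ?_)
      rw [Real.div_rpow hNw.le (by norm_num),
        Real.rpow_neg (by norm_num : (0 : ℝ) ≤ 2), div_inv_eq_mul, mul_comm]
    have e : (1 - ‖z‖) ^ (-ε) = (1 - ‖z‖) ^ (-2 - ε) * (1 - ‖z‖) ^ 2 := by
      rw [← Real.rpow_natCast, ← Real.rpow_add hz1]; congr 1; push_cast; ring
    rw [e, mul_right_comm]
    refine mul_le_mul_of_nonneg_right ?_ (by positivity)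
    refine (mul_le_mul b1 b2 (by positivity) (by positivity)).trans (le_of_eq ?_)
    rw [hK₁]; ring

/-! ### Assembling the estimate -/

theorem stmt3 (p a : ℝ) (hp0 : 0 < p) (hp1 : p ≤ 1) (ha : -1 < a)
    (μ : Measure ℂ)
    (hμ : ∃ r ∈ Set.Ioo (0 : ℝ) 1, ∃ C : ℝ, ∀ z ∈ ball (0 : ℂ) 1,
      μ (pD z r) ≤ ENNReal.ofReal (C * (1 - ‖z‖ ^ 2) ^ ((a + 2) / p))) :
    ∃ C : ℝ, ∀ g : ℂ → ℂ, MemBloch g → ∀ ζ ∈ ball (0 : ℂ) 1,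
      ENNReal.ofReal (1 - ‖ζ‖ ^ 2) *
        ∫⁻ z in ball (0 : ℂ) 1,
          ENNReal.ofReal (‖g z - g ζ‖ / ‖1 - z * (starRingEnd ℂ) ζ‖ ^ ((a + 2) / p + 1)) ∂μ ≤
      ENNReal.ofReal (C * blochNorm g) := by
  set s := (a + 2) / p with hs
  have hs1 : 1 < s := by rw [hs, lt_div_iff₀ hp0]; linarith
  -- any `0 < ε < min 1 (s - 1)` works: `ε < s - 1` makes the area weight `(1 - ‖w‖)^(s - 2 - ε)`
  -- integrable, `ε < 1` keeps the power `-(1 - ε)` of `1 - ‖ζ‖` negative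
  set ε := min 1 (s - 1) / 2 with hεdef
  have hmin : 0 < min 1 (s - 1) := lt_min one_pos (by linarith)
  have hε : 0 < ε := by positivity
  have hε1 : ε < 1 := by have := min_le_left 1 (s - 1); linarith
  have hεs : ε < s - 1 := by have := min_le_right 1 (s - 1); linarith
  obtain ⟨K, hK0, hK⟩ := carleson_forelli_rudin hε hε1 hεs hμ
  refine ⟨1 / ε * 2 ^ ε * (K * 2 ^ (1 - ε)), fun g hg ζ hζ => ?_⟩
  obtain ⟨hgd, hgb⟩ := hg
  set B := sSup ((fun z => (1 - ‖z‖ ^ 2) * ‖deriv g z‖) '' ball (0 : ℂ) 1) with hBdef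
  have hd : ∀ w ∈ ball (0 : ℂ) 1, (1 - ‖w‖ ^ 2) * ‖deriv g w‖ ≤ B := fun w hw =>
    le_csSup hgb ⟨w, hw, rfl⟩
  have hB : 0 ≤ B := le_trans
    (mul_nonneg (one_sub_sq_pos hζ).le (norm_nonneg _)) (hd ζ hζ)
  have hBn : B ≤ blochNorm g := le_add_of_nonneg_left (norm_nonneg _)
  have hζ2 := one_sub_sq_pos hζ
  have hζ1 : 0 < 1 - ‖ζ‖ := sub_pos.2 (mem_ball_zero_iff.1 hζ)
  set A : ℝ := B / ε * 2 ^ ε * (1 - ‖ζ‖ ^ 2) ^ (-ε) with hA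
  have hA0 : 0 ≤ A := by positivity
  have hint : ∫⁻ z in ball (0 : ℂ) 1,
        ENNReal.ofReal (‖g z - g ζ‖ / ‖1 - z * (starRingEnd ℂ) ζ‖ ^ (s + 1)) ∂μ
      ≤ ENNReal.ofReal (A * (K * (1 - ‖ζ‖) ^ (-(1 - ε)))) := by
    rw [ENNReal.ofReal_mul hA0]
    refine le_trans ?_ (mul_le_mul_right (hK ζ hζ) _)
    rw [← lintegral_const_mul' _ _ ENNReal.ofReal_ne_top]
    refine setLIntegral_mono' measurableSet_ball fun z hz => ?_
    rw [← ENNReal.ofReal_mul hA0]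
    refine ENNReal.ofReal_le_ofReal ?_
    have hz1 : 0 < 1 - ‖z‖ := sub_pos.2 (mem_ball_zero_iff.1 hz)
    have hz2 := one_sub_sq_pos hz
    have hgr := bloch_growth hε hB hgd hd hz hζ
    have hN := moebius_den_pos hζ hz
    rw [mul_comm ((starRingEnd ℂ) ζ)] at hgr hN
    set N := ‖1 - z * (starRingEnd ℂ) ζ‖
    have hz3 : (1 - ‖z‖ ^ 2) ^ (-ε) ≤ (1 - ‖z‖) ^ (-ε) :=
      Real.rpow_le_rpow_of_nonpos hz1 (by nlinarith [norm_nonneg z]) (by linarith)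
    have hN2 : (N ^ 2) ^ (-ε) = N ^ (-(2 * ε)) := by
      rw [← Real.rpow_natCast, ← Real.rpow_mul hN.le]; congr 1; push_cast; ring
    rw [Real.div_rpow (by positivity) (by positivity), Real.mul_rpow hζ2.le hz2.le, hN2,
      Real.rpow_neg hN.le, div_inv_eq_mul] at hgr
    have hNs : N ^ (-(s + 1 - 2 * ε)) = N ^ (2 * ε) / N ^ (s + 1) := by
      rw [← Real.rpow_sub hN]; congr 1; ring
    rw [hNs, div_le_iff₀ (by positivity)]
    calc ‖g z - g ζ‖ ≤ _ := hgr
      _ = A * ((1 - ‖z‖ ^ 2) ^ (-ε) * N ^ (2 * ε)) := by rw [hA]; ring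
      _ ≤ A * ((1 - ‖z‖) ^ (-ε) * N ^ (2 * ε)) := by gcongr
      _ = _ := by field_simp
  refine (mul_le_mul_right hint _).trans ?_
  rw [← ENNReal.ofReal_mul hζ2.le]
  refine ENNReal.ofReal_le_ofReal ?_
  have hζ3 : (1 - ‖ζ‖) ^ (-(1 - ε)) ≤ 2 ^ (1 - ε) * (1 - ‖ζ‖ ^ 2) ^ (-(1 - ε)) := by
    have : (1 - ‖ζ‖) ^ (-(1 - ε)) ≤ ((1 - ‖ζ‖ ^ 2) / 2) ^ (-(1 - ε)) :=
      Real.rpow_le_rpow_of_nonpos (by linarith) (by nlinarith [norm_nonneg ζ]) (by linarith)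
    rwa [Real.div_rpow hζ2.le (by norm_num), Real.rpow_neg (by norm_num : (0 : ℝ) ≤ 2),
      div_inv_eq_mul, mul_comm] at this
  have hprod : (1 - ‖ζ‖ ^ 2) * ((1 - ‖ζ‖ ^ 2) ^ (-ε) * (1 - ‖ζ‖ ^ 2) ^ (-(1 - ε))) = 1 := by
    rw [← Real.rpow_add hζ2, show -ε + -(1 - ε) = -1 by ring, Real.rpow_neg_one,
      mul_inv_cancel₀ (ne_of_gt hζ2)]
  -- the powers of `1 - ‖ζ‖ ^ 2` cancel exactly, leaving a multiple of `B`
  calc (1 - ‖ζ‖ ^ 2) * (A * (K * (1 - ‖ζ‖) ^ (-(1 - ε))))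
      ≤ (1 - ‖ζ‖ ^ 2) * (A * (K * (2 ^ (1 - ε) * (1 - ‖ζ‖ ^ 2) ^ (-(1 - ε))))) := by gcongr
    _ = 1 / ε * 2 ^ ε * (K * 2 ^ (1 - ε)) * B *
        ((1 - ‖ζ‖ ^ 2) * ((1 - ‖ζ‖ ^ 2) ^ (-ε) * (1 - ‖ζ‖ ^ 2) ^ (-(1 - ε)))) := by
        rw [hA]; ring
    _ = 1 / ε * 2 ^ ε * (K * 2 ^ (1 - ε)) * B := by rw [hprod, mul_one]
    _ ≤ _ := by gcongr
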